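/- Let A = [a_1, ..., a_n] ∈ ℝ^{m×n} be nonzero, Q ∈ ℝ^{m×m} symmetric positive definite, b ∈ ℝ^m, f(y) := (1/2)⟨y, Qy⟩ + ⟨b, y⟩. Let x* ∈ Δ_{n−1} minimize f(Ax) over Δ_{n−1}, y* := Ax*, Ā := Q^{1/2}[a_1 − y*, ..., a_n − y*]. Consider the Frank–Wolfe algorithm with away steps: x_0 a vertex of Δ_{n−1}, y_k = A x_k; at step k, j minimizes ⟨a_i, ∇f(y_k)⟩ over i, ℓ maximizes ⟨a_i, ∇f(y_k)⟩ over i ∈ S(x_k); if ⟨a_j − y_k, ∇f(y_k)⟩ < ⟨y_k − a_ℓ, ∇f(y_k)⟩ set a := a_j − y_k, u := e_j − x_k, θ_max := 1, otherwise a := y_k − a_ℓ, u := x_k − e_ℓ, θ_max := (x_k)_ℓ/(1 − (x_k)_ℓ); θ_k minimizes f(y_k + θ a) over [0, θ_max]; x_{k+1} := x_k + θ_k u. Then for all k ≥ 1: f(y_k) − f(y*) ≤ (1 − φ(Ā)²/(4 d(Ā)²))^{k/2} (f(y_0) − f(y*)). -/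

import Mathlib

open scoped RealInnerProductSpace BigOperators

/-- `comb a x = A x`, the combination `∑ i, x i • a i` of the columns `a i` of `A`. -/
noncomputable def comb {m n : ℕ} (a : Fin n → EuclideanSpace ℝ (Fin m)) (x : Fin n → ℝ) :
    EuclideanSpace ℝ (Fin m) := ∑ i, x i • a i

/-- `φ(A, x) = sup {λ > 0 : ∃ u v ∈ Δ_{n-1}, S(u) ⊆ S(x), Au - Av = (λ/‖Ax‖) Ax}`. -/
noncomputable def phiAt {m n : ℕ} (a : Fin n → EuclideanSpace ℝ (Fin m))
    (x : Fin n → ℝ) : ℝ :=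
  sSup {lam : ℝ | 0 < lam ∧ ∃ u ∈ stdSimplex ℝ (Fin n), ∃ v ∈ stdSimplex ℝ (Fin n),
    (∀ i, 0 < u i → 0 < x i) ∧
    comb a u - comb a v = (lam / ‖comb a x‖) • comb a x}

/-- The restricted width `φ(A) = min {φ(A, x) : x ≥ 0, Ax ≠ 0}`. -/
noncomputable def phi {m n : ℕ} (a : Fin n → EuclideanSpace ℝ (Fin m)) : ℝ :=
  sInf {t : ℝ | ∃ x : Fin n → ℝ, (∀ i, 0 ≤ x i) ∧ comb a x ≠ 0 ∧ t = phiAt a x}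

/-- The diameter `d(A) = max_{x, u ∈ Δ_{n-1}} ‖Ax - Au‖`. -/
noncomputable def diam {m n : ℕ} (a : Fin n → EuclideanSpace ℝ (Fin m)) : ℝ :=
  sSup {t : ℝ | ∃ u ∈ stdSimplex ℝ (Fin n), ∃ v ∈ stdSimplex ℝ (Fin n),
    t = ‖comb a u - comb a v‖}

/-- One iteration of the Frank–Wolfe algorithm with away steps for minimizing `f` over
`conv(A)`, mapping `x` to `x'`, where `y = Ax` and `g = ∇f(y)`:
`j` minimizes `⟪a i, g⟫`, `ℓ` maximizes `⟪a i, g⟫` over the support of `x`; a regular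
step (`d = a j - y`, `u = e j - x`, `θmax = 1`) is taken when
`⟪a j - y, g⟫ < ⟪y - a ℓ, g⟫`, otherwise an away step
(`d = y - a ℓ`, `u = x - e ℓ`, `θmax = x ℓ / (1 - x ℓ)`);
`θ` minimizes `f (y + θ • d)` over `[0, θmax]` and `x' = x + θ • u`. -/
def FWAwayStep {m n : ℕ} (a : Fin n → EuclideanSpace ℝ (Fin m))
    (f : EuclideanSpace ℝ (Fin m) → ℝ) (x x' : Fin n → ℝ)
    (y g : EuclideanSpace ℝ (Fin m)) : Prop :=
  ∃ (j ℓ : Fin n) (d : EuclideanSpace ℝ (Fin m)) (u : Fin n → ℝ) (θmax θ : ℝ),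
    (∀ i, ⟪a j, g⟫ ≤ ⟪a i, g⟫) ∧
    0 < x ℓ ∧ (∀ i, 0 < x i → ⟪a i, g⟫ ≤ ⟪a ℓ, g⟫) ∧
    ((⟪a j - y, g⟫ < ⟪y - a ℓ, g⟫ ∧
        d = a j - y ∧ u = Pi.single j 1 - x ∧ θmax = 1) ∨
     (¬ (⟪a j - y, g⟫ < ⟪y - a ℓ, g⟫) ∧
        d = y - a ℓ ∧ u = x - Pi.single ℓ 1 ∧ θmax = x ℓ / (1 - x ℓ))) ∧
    0 ≤ θ ∧ θ ≤ θmax ∧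
    (∀ θ' : ℝ, 0 ≤ θ' → θ' ≤ θmax → f (y + θ • d) ≤ f (y + θ' • d)) ∧
    x' = x + θ • u

/-!
Fix an arbitrary competitor `ystar = A xstar` and put `h = f y - f ystar`, `s = ⟪d, g⟫`, where
`d` is the direction of the step taken at `y`. By the choice between the two kinds of steps,
`-2 s` dominates every `⟪a i - a j, g⟫` with `i ∈ S(x)`. The restricted width of `Ā` turns this
bound on a linear functional into `φ(Ā) ⟪y - ystar, g⟫ ≤ -2 s ‖R (y - ystar)‖`, and together
with the strong convexity estimate `h + κ/2 ‖R (y - ystar)‖² ≤ ⟪y - ystar, g⟫` (for the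
quadratic `f`, an equality with `κ = 1`) and the inequality of arithmetic and geometric means it
gives `κ φ(Ā)² h ≤ 2 s²`.

An unobstructed line search decreases `f` by at least `s² / (2 d(Ā)²)`, hence contracts the gap
by the factor `1 - κ φ(Ā)² / (4 d(Ā)²)`. The only obstructed steps without this contraction are
away steps of maximal length, and those remove a vertex from the support. As every other step
adds at most one vertex, at least half of the steps contract the gap.
-/

section Simplex

variable {ι : Type*} [Fintype ι]

/-- The support `S(x) = {i : x i > 0}` of a nonnegative vector, as a finset; its cardinality is the
potential that pays for the steps without contraction. -/
noncomputable def posSupport (x : ι → ℝ) : Finset ι := {i | 0 < x i}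

lemma mem_posSupport {x : ι → ℝ} {i : ι} : i ∈ posSupport x ↔ 0 < x i := by
  simp [posSupport]

variable [DecidableEq ι]

lemma posSupport_single_one (i : ι) : posSupport (Pi.single i 1 : ι → ℝ) = {i} := by
  ext k
  by_cases hk : k = i <;> simp [mem_posSupport, hk]

lemma eq_single_of_mem_stdSimplex {x : ι → ℝ} (hx : x ∈ stdSimplex ℝ ι) {i : ι} (hi : x i = 1) :
    x = Pi.single i 1 := by
  have hrest : ∑ k ∈ Finset.univ.erase i, x k = 0 := by
    have hsum := Finset.add_sum_erase Finset.univ x (Finset.mem_univ i)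
    rw [hx.2] at hsum
    linarith
  rw [Finset.sum_eq_zero_iff_of_nonneg fun k _ => hx.1 k] at hrest
  ext k
  by_cases hk : k = i
  · simp [hk, hi]
  · simp [hk, hrest k (by simp [hk])]

lemma add_smul_sub_single_mem_stdSimplex {x : ι → ℝ} (hx : x ∈ stdSimplex ℝ ι) {i : ι} {θ : ℝ}
    (hθ0 : 0 ≤ θ) (hθ : θ ≤ x i / (1 - x i)) : x + θ • (x - Pi.single i 1) ∈ stdSimplex ℝ ι := by
  have hi : θ * (1 - x i) ≤ x i := by
    rcases (mem_Icc_of_mem_stdSimplex hx i).2.eq_or_lt with h | h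
    · simp [h]
    · rwa [le_div_iff₀ (sub_pos.2 h)] at hθ
  refine ⟨fun k => ?_, by simp [Finset.sum_add_distrib, ← Finset.mul_sum, hx.2]⟩
  have hk := hx.1 k
  by_cases hki : k = i
  · subst hki
    simp only [Pi.add_apply, Pi.smul_apply, Pi.sub_apply, smul_eq_mul, Pi.single_eq_same]
    linarith
  · simp only [Pi.add_apply, Pi.smul_apply, Pi.sub_apply, smul_eq_mul, Pi.single_eq_of_ne hki,
      sub_zero]
    positivity

lemma posSupport_add_smul_single_sub_subset {x : ι → ℝ} (hx : ∀ i, 0 ≤ x i) (j : ι) (θ : ℝ) :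
    posSupport (x + θ • (Pi.single j 1 - x)) ⊆ insert j (posSupport x) := by
  intro i hi
  by_contra hcon
  simp only [Finset.mem_insert, mem_posSupport, not_or, not_lt] at hcon
  simp [mem_posSupport, hcon.1, le_antisymm hcon.2 (hx i)] at hi

lemma posSupport_add_smul_sub_single_subset {x : ι → ℝ} (hx : ∀ i, 0 ≤ x i) {ℓ : ι} (hℓ : 0 < x ℓ)
    (θ : ℝ) : posSupport (x + θ • (x - Pi.single ℓ 1)) ⊆ posSupport x := by
  intro i hi
  by_contra hcon
  have hxi : x i = 0 := le_antisymm (not_lt.1 (mem_posSupport.not.1 hcon)) (hx i)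
  have hiℓ : i ≠ ℓ := by
    rintro rfl
    exact hℓ.ne' hxi
  simp [mem_posSupport, hiℓ, hxi] at hi

lemma posSupport_maximal_away_ssubset {x : ι → ℝ} (hx : ∀ i, 0 ≤ x i) {ℓ : ι} (hℓ : 0 < x ℓ)
    (hℓ1 : x ℓ ≠ 1) :
    posSupport (x + (x ℓ / (1 - x ℓ)) • (x - Pi.single ℓ 1)) ⊂ posSupport x := by
  refine (Finset.ssubset_iff_of_subset (posSupport_add_smul_sub_single_subset hx hℓ _)).2
    ⟨ℓ, mem_posSupport.2 hℓ, ?_⟩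
  have hne : 1 - x ℓ ≠ 0 := sub_ne_zero.2 hℓ1.symm
  have hzero : x ℓ + x ℓ / (1 - x ℓ) * (x ℓ - 1) = 0 := by
    field_simp
    ring
  simp [mem_posSupport, hzero]

end Simplex

section Comb

variable {m n : ℕ} (a : Fin n → EuclideanSpace ℝ (Fin m))

lemma comb_eq_linearCombination (x : Fin n → ℝ) : comb a x = Fintype.linearCombination ℝ a x :=
  rfl

lemma comb_single_one (i : Fin n) : comb a (Pi.single i 1) = a i := by
  simp [comb_eq_linearCombination]

lemma comb_add_smul_single_sub (x : Fin n → ℝ) (j : Fin n) (θ : ℝ) :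
    comb a (x + θ • (Pi.single j 1 - x)) = comb a x + θ • (a j - comb a x) := by
  simp [comb_eq_linearCombination]

lemma comb_add_smul_sub_single (x : Fin n → ℝ) (ℓ : Fin n) (θ : ℝ) :
    comb a (x + θ • (x - Pi.single ℓ 1)) = comb a x + θ • (comb a x - a ℓ) := by
  simp [comb_eq_linearCombination]

variable {a}

lemma map_comb_le (ψ : EuclideanSpace ℝ (Fin m) →ₗ[ℝ] ℝ) {u : Fin n → ℝ}
    (hu : u ∈ stdSimplex ℝ (Fin n)) {M : ℝ} (hM : ∀ i, 0 < u i → ψ (a i) ≤ M) :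
    ψ (comb a u) ≤ M := by
  calc ψ (comb a u) = ∑ i, u i * ψ (a i) := by simp [comb]
    _ ≤ ∑ i, u i * M := by
      refine Finset.sum_le_sum fun i _ => ?_
      rcases (hu.1 i).eq_or_lt with hi | hi
      · simp [← hi]
      · exact mul_le_mul_of_nonneg_left (hM i hi) hi.le
    _ = M := by rw [← Finset.sum_mul, hu.2, one_mul]

lemma le_map_comb (ψ : EuclideanSpace ℝ (Fin m) →ₗ[ℝ] ℝ) {u : Fin n → ℝ}
    (hu : u ∈ stdSimplex ℝ (Fin n)) {M : ℝ} (hM : ∀ i, M ≤ ψ (a i)) : M ≤ ψ (comb a u) :=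
  neg_le_neg_iff.1 (map_comb_le (-ψ) hu fun i _ => neg_le_neg (hM i))

lemma map_comb_sub_map_comb_le (ψ : EuclideanSpace ℝ (Fin m) →ₗ[ℝ] ℝ) {u v : Fin n → ℝ}
    (hu : u ∈ stdSimplex ℝ (Fin n)) (hv : v ∈ stdSimplex ℝ (Fin n)) {M : ℝ}
    (hM : ∀ i, 0 < u i → ∀ j, ψ (a i) - ψ (a j) ≤ M) : ψ (comb a u) - ψ (comb a v) ≤ M := by
  have hu_le : ∀ j, ψ (comb a u) ≤ M + ψ (a j) := fun j =>
    map_comb_le ψ hu fun i hi => sub_le_iff_le_add.1 (hM i hi j)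
  exact sub_le_comm.1 (le_map_comb ψ hv fun j => sub_le_iff_le_add'.2 (hu_le j))

lemma comb_map_sub {p : ℕ} {R : EuclideanSpace ℝ (Fin m) →ₗ[ℝ] EuclideanSpace ℝ (Fin p)}
    {z : EuclideanSpace ℝ (Fin m)} {abar : Fin n → EuclideanSpace ℝ (Fin p)}
    (habar : ∀ i, abar i = R (a i - z)) {u : Fin n → ℝ} (hu : u ∈ stdSimplex ℝ (Fin n)) :
    comb abar u = R (comb a u - z) := by
  calc comb abar u = R (comb a u) - (∑ i, u i) • R z := by
        simp [comb, habar, smul_sub, Finset.sum_smul]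
    _ = R (comb a u - z) := by rw [hu.2, one_smul, map_sub]

end Comb

section Width

variable {m n : ℕ} {a : Fin n → EuclideanSpace ℝ (Fin m)}

lemma diam_nonneg : 0 ≤ diam a := by
  refine Real.sSup_nonneg ?_
  rintro _ ⟨u, -, v, -, rfl⟩
  exact norm_nonneg _

lemma norm_comb_sub_comb_le_diam {u v : Fin n → ℝ} (hu : u ∈ stdSimplex ℝ (Fin n))
    (hv : v ∈ stdSimplex ℝ (Fin n)) : ‖comb a u - comb a v‖ ≤ diam a := by
  have hcont : Continuous fun p : (Fin n → ℝ) × (Fin n → ℝ) => ‖comb a p.1 - comb a p.2‖ := by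
    unfold comb
    fun_prop
  have hcompact := (isCompact_stdSimplex ℝ (Fin n)).prod (isCompact_stdSimplex ℝ (Fin n))
  refine le_csSup ((hcompact.bddAbove_image hcont.continuousOn).mono ?_) ⟨u, hu, v, hv, rfl⟩
  rintro _ ⟨u, hu, v, hv, rfl⟩
  exact ⟨(u, v), ⟨hu, hv⟩, rfl⟩

lemma phiAt_nonneg (x : Fin n → ℝ) : 0 ≤ phiAt a x :=
  Real.sSup_nonneg fun _ ht => ht.1.le

lemma phi_nonneg : 0 ≤ phi a := by
  refine Real.sInf_nonneg ?_
  rintro _ ⟨x, -, -, rfl⟩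
  exact phiAt_nonneg x

lemma phi_le_phiAt {x : Fin n → ℝ} (hx : ∀ i, 0 ≤ x i) (hax : comb a x ≠ 0) :
    phi a ≤ phiAt a x := by
  refine csInf_le ⟨0, ?_⟩ ⟨x, hx, hax, rfl⟩
  rintro _ ⟨x, -, -, rfl⟩
  exact phiAt_nonneg x

lemma phi_mul_map_comb_le (ψ : EuclideanSpace ℝ (Fin m) →ₗ[ℝ] ℝ) {x : Fin n → ℝ}
    (hx : ∀ i, 0 ≤ x i) {M : ℝ} (hM : ∀ i, 0 < x i → ∀ j, ψ (a i) - ψ (a j) ≤ M) :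
    phi a * ψ (comb a x) ≤ M * ‖comb a x‖ := by
  by_cases hax : comb a x = 0
  · simp [hax]
  have hM0 : 0 ≤ M := by
    obtain ⟨i, hi⟩ : ∃ i, x i ≠ 0 := by
      by_contra! hzero
      exact hax (by simp [comb, hzero])
    simpa using hM i ((hx i).lt_of_ne' hi) i
  rcases le_or_gt (ψ (comb a x)) 0 with hψ | hψ
  · exact (mul_nonpos_of_nonneg_of_nonpos phi_nonneg hψ).trans (by positivity)
  rw [← le_div_iff₀ hψ]
  refine (phi_le_phiAt hx hax).trans (Real.sSup_le ?_ (by positivity))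
  rintro t ⟨-, u, hu, v, hv, hux, huv⟩
  have hspread := map_comb_sub_map_comb_le ψ hu hv fun i hi => hM i (hux i hi)
  have hnorm : 0 < ‖comb a x‖ := norm_pos_iff.2 hax
  rw [← map_sub, huv, map_smul, smul_eq_mul, div_mul_eq_mul_div, div_le_iff₀ hnorm] at hspread
  rwa [le_div_iff₀ hψ]

lemma phi_le_diam : phi a ≤ diam a := by
  by_cases h : ∃ x : Fin n → ℝ, (∀ i, 0 ≤ x i) ∧ comb a x ≠ 0
  · obtain ⟨x, hx, hax⟩ := h
    set c := comb a x
    have hspread : ∀ i, 0 < x i → ∀ j, innerₗ _ c (a i) - innerₗ _ c (a j) ≤ ‖c‖ * diam a := by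
      intro i _ j
      have hij : ‖a i - a j‖ ≤ diam a := by
        simpa only [comb_single_one] using norm_comb_sub_comb_le_diam (a := a)
          (single_mem_stdSimplex ℝ i) (single_mem_stdSimplex ℝ j)
      rw [← map_sub, innerₗ_apply_apply]
      exact (real_inner_le_norm _ _).trans (by gcongr)
    have hphi : phi a * innerₗ _ c c ≤ ‖c‖ * diam a * ‖c‖ :=
      phi_mul_map_comb_le (innerₗ _ c) hx hspread
    rw [innerₗ_apply_apply, real_inner_self_eq_norm_sq] at hphi
    have hc : 0 < ‖c‖ ^ 2 := by positivity
    exact le_of_mul_le_mul_right (by linarith) hc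
  · have hempty : {t : ℝ | ∃ x : Fin n → ℝ, (∀ i, 0 ≤ x i) ∧ comb a x ≠ 0 ∧ t = phiAt a x} = ∅ :=
      Set.eq_empty_of_forall_notMem fun _ ⟨x, hx, hax, _⟩ => h ⟨x, hx, hax⟩
    rw [phi, hempty, Real.sInf_empty]
    exact diam_nonneg

lemma mul_phi_sq_div_le_quarter {κ : ℝ} (hκ : κ ≤ 1) :
    κ * (phi a ^ 2 / (4 * diam a ^ 2)) ≤ 1 / 4 := by
  have hsq : phi a ^ 2 ≤ diam a ^ 2 := pow_le_pow_left₀ phi_nonneg phi_le_diam 2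
  exact (mul_le_of_le_one_left (by positivity) hκ).trans
    (div_le_of_le_mul₀ (by positivity) (by norm_num) (by linarith))

end Width

section LineSearch

variable {E F : Type*} [NormedAddCommGroup E] [InnerProductSpace ℝ E]

lemma convexOn_of_forall_inner_le {f : E → ℝ} {g : E → E}
    (hfg : ∀ y d, f y + ⟪d, g y⟫ ≤ f (y + d)) : ConvexOn ℝ Set.univ f := by
  refine ⟨convex_univ, fun y _ z _ s t hs ht hst => ?_⟩
  set w := s • y + t • z
  have hy := mul_le_mul_of_nonneg_left (hfg w (y - w)) hs
  have hz := mul_le_mul_of_nonneg_left (hfg w (z - w)) ht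
  have hcancel : s * ⟪y - w, g w⟫ + t * ⟪z - w, g w⟫ = 0 := by
    rw [← real_inner_smul_left, ← real_inner_smul_left, ← inner_add_left, smul_sub, smul_sub,
      sub_add_sub_comm, ← add_smul, hst, one_smul, sub_self, inner_zero_left]
  rw [add_sub_cancel] at hy hz
  have hw : s * f w + t * f w = f w := by rw [← add_mul, hst, one_mul]
  simp only [smul_eq_mul]
  linarith

lemma isMinOn_ray_of_isMinOn_segment {f : E → ℝ} (hf : ConvexOn ℝ Set.univ f) {y d : E} {T θ : ℝ}
    (hθ0 : 0 ≤ θ) (hθT : θ < T) (hmin : IsMinOn (fun t : ℝ => f (y + t • d)) (Set.Icc 0 T) θ) :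
    IsMinOn (fun t : ℝ => f (y + t • d)) (Set.Ici 0) θ := by
  have hconv : ConvexOn ℝ (Set.Ici 0) fun t : ℝ => f (y + t • d) := by
    have hline := hf.comp_affineMap (AffineMap.lineMap y (y + d))
    simp only [Set.preimage_univ] at hline
    refine (hline.subset (Set.subset_univ _) (convex_Ici 0)).congr fun t _ => ?_
    simp [AffineMap.lineMap_apply, add_comm]
  refine IsMinOn.of_isLocalMinOn_of_convexOn hθ0 ?_ hconv
  have hnhds : Set.Icc 0 T ∈ nhdsWithin θ (Set.Ici 0) := by
    rw [← Set.Ici_inter_Iic]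
    exact Filter.inter_mem self_mem_nhdsWithin (mem_nhdsWithin_of_mem_nhds (Iic_mem_nhds hθT))
  exact Filter.mem_of_superset hnhds hmin

variable [NormedAddCommGroup F] [NormedSpace ℝ F] {f : E → ℝ} {y g d : E} {R : E →ₗ[ℝ] F} {D w : ℝ}

lemma apply_add_smul_le_of_smooth (hsmooth : ∀ v, f (y + v) ≤ f y + ⟪v, g⟫ + 1 / 2 * ‖R v‖ ^ 2)
    (hd : ‖R d‖ ≤ D) (t : ℝ) :
    f (y + t • d) ≤ f y + t * ⟪d, g⟫ + 1 / 2 * t ^ 2 * D ^ 2 := by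
  calc f (y + t • d) ≤ f y + ⟪t • d, g⟫ + 1 / 2 * ‖R (t • d)‖ ^ 2 := hsmooth _
    _ = f y + t * ⟪d, g⟫ + 1 / 2 * t ^ 2 * ‖R d‖ ^ 2 := by
      rw [real_inner_smul_left, map_smul, norm_smul, mul_pow, Real.norm_eq_abs, sq_abs, mul_assoc]
    _ ≤ f y + t * ⟪d, g⟫ + 1 / 2 * t ^ 2 * D ^ 2 := by gcongr

lemma apply_add_optimal_smul_le (hsmooth : ∀ v, f (y + v) ≤ f y + ⟪v, g⟫ + 1 / 2 * ‖R v‖ ^ 2)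
    (hd : ‖R d‖ ≤ D) :
    f (y + (-⟪d, g⟫ / D ^ 2) • d) ≤ f y - ⟪d, g⟫ ^ 2 / (2 * D ^ 2) := by
  refine (apply_add_smul_le_of_smooth hsmooth hd _).trans_eq ?_
  rcases eq_or_ne D 0 with rfl | hD
  · simp
  · field_simp
    ring

lemma le_sub_of_le_on_ray (hsmooth : ∀ v, f (y + v) ≤ f y + ⟪v, g⟫ + 1 / 2 * ‖R v‖ ^ 2)
    (hd : ‖R d‖ ≤ D) (hdg : ⟪d, g⟫ ≤ 0) (hw : ∀ t : ℝ, 0 ≤ t → w ≤ f (y + t • d)) :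
    w ≤ f y - ⟪d, g⟫ ^ 2 / (2 * D ^ 2) :=
  (hw _ (div_nonneg (neg_nonneg.2 hdg) (sq_nonneg D))).trans (apply_add_optimal_smul_le hsmooth hd)

lemma le_sub_min_of_le_on_unit_segment (hsmooth : ∀ v, f (y + v) ≤ f y + ⟪v, g⟫ + 1 / 2 * ‖R v‖ ^ 2)
    (hd : ‖R d‖ ≤ D) (hdg : ⟪d, g⟫ ≤ 0) (hw : ∀ t : ℝ, 0 ≤ t → t ≤ 1 → w ≤ f (y + t • d)) :
    w ≤ f y - min (⟪d, g⟫ ^ 2 / (2 * D ^ 2)) (-⟪d, g⟫ / 2) := by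
  rcases le_total (-⟪d, g⟫ / D ^ 2) 1 with hshort | hlong
  · have hdecrease := (hw _ (div_nonneg (neg_nonneg.2 hdg) (sq_nonneg D)) hshort).trans
      (apply_add_optimal_smul_le hsmooth hd)
    exact hdecrease.trans (sub_le_sub_left (min_le_left _ _) _)
  · have hD : 0 < D ^ 2 := by
      refine (sq_nonneg D).lt_of_ne' fun h0 => ?_
      rw [h0, div_zero] at hlong
      exact absurd hlong (by norm_num)
    have hlarge : D ^ 2 ≤ -⟪d, g⟫ := (one_le_div₀ hD).1 hlong
    have hfull := (hw 1 zero_le_one le_rfl).trans (apply_add_smul_le_of_smooth hsmooth hd 1)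
    linarith [min_le_right (⟪d, g⟫ ^ 2 / (2 * D ^ 2)) (-⟪d, g⟫ / 2)]

end LineSearch

section Gap

variable {m n p : ℕ} {a : Fin n → EuclideanSpace ℝ (Fin m)}
  {abar : Fin n → EuclideanSpace ℝ (Fin p)}
  {R : EuclideanSpace ℝ (Fin m) →ₗ[ℝ] EuclideanSpace ℝ (Fin p)}
  {g ystar : EuclideanSpace ℝ (Fin m)} {x : Fin n → ℝ} {M : ℝ}

lemma norm_map_comb_sub_comb_le_diam (habar : ∀ i, abar i = R (a i - ystar)) {u v : Fin n → ℝ}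
    (hu : u ∈ stdSimplex ℝ (Fin n)) (hv : v ∈ stdSimplex ℝ (Fin n)) :
    ‖R (comb a u - comb a v)‖ ≤ diam abar := by
  simpa only [comb_map_sub habar hu, comb_map_sub habar hv, ← map_sub, sub_sub_sub_cancel_right]
    using norm_comb_sub_comb_le_diam (a := abar) hu hv

lemma phi_mul_inner_le (hR : Function.Injective R) (habar : ∀ i, abar i = R (a i - ystar))
    (hx : x ∈ stdSimplex ℝ (Fin n)) (hM : ∀ i, 0 < x i → ∀ j, ⟪a i, g⟫ - ⟪a j, g⟫ ≤ M) :
    phi abar * ⟪comb a x - ystar, g⟫ ≤ M * ‖R (comb a x - ystar)‖ := by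
  -- `⟪·, g⟫` factors through the injective map `R`.
  obtain ⟨S, hS⟩ := R.exists_leftInverse_of_injective (LinearMap.ker_eq_bot.2 hR)
  let ψ : EuclideanSpace ℝ (Fin p) →ₗ[ℝ] ℝ := innerₗ _ g ∘ₗ S
  have hψ : ∀ v, ψ (R v) = ⟪v, g⟫ := fun v => by
    rw [LinearMap.comp_apply, ← LinearMap.comp_apply S, hS, LinearMap.id_apply,
      innerₗ_apply_apply, real_inner_comm]
  have hwidth := phi_mul_map_comb_le (a := abar) ψ hx.1 (M := M) fun i hi j => by
    simpa only [habar, hψ, inner_sub_left, sub_sub_sub_cancel_right] using hM i hi j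
  rwa [comb_map_sub habar hx, hψ] at hwidth

lemma mul_phi_sq_mul_gap_le {h κ : ℝ} (hR : Function.Injective R)
    (habar : ∀ i, abar i = R (a i - ystar)) (hx : x ∈ stdSimplex ℝ (Fin n))
    (hM : ∀ i, 0 < x i → ∀ j, ⟪a i, g⟫ - ⟪a j, g⟫ ≤ M) (hκ : 0 ≤ κ) (hh : 0 ≤ h)
    (hstrong : h + κ / 2 * ‖R (comb a x - ystar)‖ ^ 2 ≤ ⟪comb a x - ystar, g⟫) :
    κ * phi abar ^ 2 * h ≤ M ^ 2 / 2 := by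
  have hwidth := phi_mul_inner_le hR habar hx hM
  by_cases hzero : comb a x - ystar = 0
  · obtain rfl : h = 0 := le_antisymm (by simpa [hzero] using hstrong) hh
    rw [mul_zero]
    positivity
  set r := ‖R (comb a x - ystar)‖
  have hr0 : 0 < r := norm_pos_iff.2 ((map_ne_zero_iff R hR).2 hzero)
  have hsq : (phi abar * (h + κ / 2 * r ^ 2)) ^ 2 ≤ (M * r) ^ 2 := by
    refine pow_le_pow_left₀ (mul_nonneg phi_nonneg (by positivity)) (le_trans ?_ hwidth) 2
    exact mul_le_mul_of_nonneg_left hstrong phi_nonneg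
  have hamgm : 2 * κ * h * r ^ 2 ≤ (h + κ / 2 * r ^ 2) ^ 2 := by
    linarith [sq_nonneg (h - κ / 2 * r ^ 2)]
  refine le_of_mul_le_mul_right ?_ (pow_pos hr0 2)
  calc κ * phi abar ^ 2 * h * r ^ 2 = phi abar ^ 2 * (2 * κ * h * r ^ 2) / 2 := by ring
    _ ≤ phi abar ^ 2 * (h + κ / 2 * r ^ 2) ^ 2 / 2 := by gcongr
    _ ≤ (M * r) ^ 2 / 2 := by rw [← mul_pow]; gcongr
    _ = M ^ 2 / 2 * r ^ 2 := by ring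

end Gap

namespace FWAwayStep

variable {m n : ℕ} {a : Fin n → EuclideanSpace ℝ (Fin m)} {f : EuclideanSpace ℝ (Fin m) → ℝ}
  {x x' : Fin n → ℝ} {y g : EuclideanSpace ℝ (Fin m)}

lemma posSupport_nonempty (hstep : FWAwayStep a f x x' y g) : (posSupport x).Nonempty := by
  obtain ⟨_, ℓ, _, _, _, _, _, hℓ, _⟩ := hstep
  exact ⟨ℓ, mem_posSupport.2 hℓ⟩

lemma mem_stdSimplex (hstep : FWAwayStep a f x x' y g) (hx : x ∈ stdSimplex ℝ (Fin n)) :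
    x' ∈ stdSimplex ℝ (Fin n) := by
  obtain ⟨j, ℓ, _, _, _, θ, -, -, -, hcase, hθ0, hθ, -, rfl⟩ := hstep
  rcases hcase with ⟨-, -, rfl, rfl⟩ | ⟨-, -, rfl, rfl⟩
  · exact (convex_stdSimplex ℝ (Fin n)).add_smul_sub_mem hx (single_mem_stdSimplex ℝ j) ⟨hθ0, hθ⟩
  · exact add_smul_sub_single_mem_stdSimplex hx hθ0 hθ

lemma card_posSupport_le (hstep : FWAwayStep a f x x' y g) (hx : ∀ i, 0 ≤ x i) :
    (posSupport x').card ≤ (posSupport x).card + 1 := by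
  obtain ⟨j, ℓ, _, _, _, θ, -, hℓ, -, hcase, -, -, -, rfl⟩ := hstep
  rcases hcase with ⟨-, -, rfl, -⟩ | ⟨-, -, rfl, -⟩
  · exact (Finset.card_le_card (posSupport_add_smul_single_sub_subset hx j θ)).trans
      (Finset.card_insert_le _ _)
  · exact (Finset.card_le_card (posSupport_add_smul_sub_single_subset hx hℓ θ)).trans
      (Nat.le_succ _)

lemma apply_comb_le (hstep : FWAwayStep a f x x' (comb a x) g) :
    f (comb a x') ≤ f (comb a x) := by
  obtain ⟨j, ℓ, _, _, _, θ, -, -, -, hcase, hθ0, hθ, hmin, rfl⟩ := hstep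
  have hzero := hmin 0 le_rfl (hθ0.trans hθ)
  rw [zero_smul, add_zero] at hzero
  rcases hcase with ⟨-, rfl, rfl, -⟩ | ⟨-, rfl, rfl, -⟩
  · rwa [comb_add_smul_single_sub]
  · rwa [comb_add_smul_sub_single]

variable {p : ℕ} {abar : Fin n → EuclideanSpace ℝ (Fin p)}
  {R : EuclideanSpace ℝ (Fin m) →ₗ[ℝ] EuclideanSpace ℝ (Fin p)}
  {ystar : EuclideanSpace ℝ (Fin m)}

lemma away_minimal_on_ray_or_drop {ℓ : Fin n} {θ : ℝ} (hx : x ∈ stdSimplex ℝ (Fin n))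
    (hconv : ConvexOn ℝ Set.univ f) (hℓ : 0 < x ℓ) (hθ0 : 0 ≤ θ) (hθ : θ ≤ x ℓ / (1 - x ℓ))
    (hmin : ∀ t : ℝ, 0 ≤ t → t ≤ x ℓ / (1 - x ℓ) →
      f (comb a x + θ • (comb a x - a ℓ)) ≤ f (comb a x + t • (comb a x - a ℓ))) :
    (∀ t : ℝ, 0 ≤ t →
      f (comb a x + θ • (comb a x - a ℓ)) ≤ f (comb a x + t • (comb a x - a ℓ))) ∨
    (posSupport (x + θ • (x - Pi.single ℓ 1))).card < (posSupport x).card := by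
  rcases hθ.lt_or_eq with hθlt | rfl
  · exact Or.inl fun t ht =>
      isMinOn_ray_of_isMinOn_segment hconv hθ0 hθlt (fun t ht => hmin t ht.1 ht.2) ht
  rcases eq_or_ne (x ℓ) 1 with hℓ1 | hℓ1
  · left
    intro t _
    simp [eq_single_of_mem_stdSimplex hx hℓ1, comb_single_one]
  · exact Or.inr (Finset.card_lt_card (posSupport_maximal_away_ssubset hx.1 hℓ hℓ1))

lemma decrease_or_drop (hstep : FWAwayStep a f x x' (comb a x) g)
    (hx : x ∈ stdSimplex ℝ (Fin n)) (habar : ∀ i, abar i = R (a i - ystar))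
    (hconv : ConvexOn ℝ Set.univ f)
    (hsmooth : ∀ d, f (comb a x + d) ≤ f (comb a x) + ⟪d, g⟫ + 1 / 2 * ‖R d‖ ^ 2) :
    (∃ s, (∀ i, 0 < x i → ∀ j, ⟪a i, g⟫ - ⟪a j, g⟫ ≤ 2 * s) ∧
      f (comb a x') ≤ f (comb a x) - min (s ^ 2 / (2 * diam abar ^ 2)) (s / 2)) ∨
    (posSupport x').card < (posSupport x).card := by
  obtain ⟨j, ℓ, d, _, θmax, θ, hj, hℓ, hℓmax, hcase, hθ0, hθ, hmin, rfl⟩ := hstep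
  have hwidth {s : ℝ} (hs : ⟪a ℓ, g⟫ - ⟪a j, g⟫ ≤ 2 * s) :
      ∀ i, 0 < x i → ∀ j, ⟪a i, g⟫ - ⟪a j, g⟫ ≤ 2 * s :=
    fun i hi k => (sub_le_sub (hℓmax i hi) (hj k)).trans hs
  have hsℓ : 0 ≤ ⟪a ℓ, g⟫ - ⟪a j, g⟫ := sub_nonneg.2 (hj ℓ)
  have hvertex (i : Fin n) : Pi.single i (1 : ℝ) ∈ stdSimplex ℝ (Fin n) := single_mem_stdSimplex ℝ i
  rcases hcase with ⟨hlt, rfl, rfl, rfl⟩ | ⟨hlt, rfl, rfl, rfl⟩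
  · left
    have hs : ⟪a ℓ, g⟫ - ⟪a j, g⟫ ≤ 2 * -⟪a j - comb a x, g⟫ := by
      simp only [inner_sub_left] at hlt ⊢
      linarith
    have hd : ‖R (a j - comb a x)‖ ≤ diam abar := by
      simpa only [comb_single_one] using norm_map_comb_sub_comb_le_diam habar (hvertex j) hx
    refine ⟨_, hwidth hs, ?_⟩
    rw [comb_add_smul_single_sub, neg_sq]
    exact le_sub_min_of_le_on_unit_segment hsmooth hd (by linarith) hmin
  rcases away_minimal_on_ray_or_drop hx hconv hℓ hθ0 hθ hmin with hray | hdrop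
  · left
    have hs : ⟪a ℓ, g⟫ - ⟪a j, g⟫ ≤ 2 * -⟪comb a x - a ℓ, g⟫ := by
      simp only [inner_sub_left] at hlt ⊢
      linarith
    have hd : ‖R (comb a x - a ℓ)‖ ≤ diam abar := by
      simpa only [comb_single_one] using norm_map_comb_sub_comb_le_diam habar hx (hvertex ℓ)
    refine ⟨_, hwidth hs, ?_⟩
    rw [comb_add_smul_sub_single, neg_sq]
    exact (le_sub_of_le_on_ray hsmooth hd (by linarith) hray).trans
      (sub_le_sub_left (min_le_left _ _) _)
  · exact Or.inr hdrop

lemma contraction_or_drop {xstar : Fin n → ℝ} {κ : ℝ}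
    (hstep : FWAwayStep a f x x' (comb a x) g) (hx : x ∈ stdSimplex ℝ (Fin n))
    (hR : Function.Injective R) (habar : ∀ i, abar i = R (a i - ystar))
    (hxstar : xstar ∈ stdSimplex ℝ (Fin n)) (hystar : ystar = comb a xstar)
    (hκ : κ ∈ Set.Icc (0 : ℝ) 1) (hconv : ConvexOn ℝ Set.univ f)
    (hsmooth : ∀ d, f (comb a x + d) ≤ f (comb a x) + ⟪d, g⟫ + 1 / 2 * ‖R d‖ ^ 2)
    (hstrong : f (comb a x) - f ystar + κ / 2 * ‖R (comb a x - ystar)‖ ^ 2 ≤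
      ⟪comb a x - ystar, g⟫)
    (hgap : 0 ≤ f (comb a x) - f ystar) :
    (f (comb a x') - f ystar ≤
        (1 - κ * (phi abar ^ 2 / (4 * diam abar ^ 2))) * (f (comb a x) - f ystar) ∧
      (posSupport x').card ≤ (posSupport x).card + 1) ∨
    (f (comb a x') - f ystar ≤ f (comb a x) - f ystar ∧
      (posSupport x').card + 1 ≤ (posSupport x).card) := by
  obtain ⟨hκ0, hκ1⟩ := hκ
  rcases hstep.decrease_or_drop hx habar hconv hsmooth with ⟨s, hs, hdecrease⟩ | hdrop
  swap
  · exact Or.inr ⟨sub_le_sub_right hstep.apply_comb_le _, hdrop⟩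
  refine Or.inl ⟨?_, hstep.card_posSupport_le hx.1⟩
  set h := f (comb a x) - f ystar
  have hlong : κ * (phi abar ^ 2 / (4 * diam abar ^ 2)) * h ≤ s ^ 2 / (2 * diam abar ^ 2) := by
    calc κ * (phi abar ^ 2 / (4 * diam abar ^ 2)) * h
        = κ * phi abar ^ 2 * h / (4 * diam abar ^ 2) := by ring
      _ ≤ (2 * s) ^ 2 / 2 / (4 * diam abar ^ 2) := by
        gcongr
        exact mul_phi_sq_mul_gap_le hR habar hx hs hκ0 hgap hstrong
      _ = s ^ 2 / (2 * diam abar ^ 2) := by ring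
  have hshort : κ * (phi abar ^ 2 / (4 * diam abar ^ 2)) * h ≤ s / 2 := by
    have hgap_le : h ≤ 2 * s := by
      have hspread := map_comb_sub_map_comb_le (innerₗ _ g) hx hxstar (M := 2 * s)
        fun i hi j => by simpa only [innerₗ_apply_apply, real_inner_comm g] using hs i hi j
      rw [← hystar, ← map_sub, innerₗ_apply_apply, real_inner_comm] at hspread
      linarith [mul_nonneg hκ0 (sq_nonneg ‖R (comb a x - ystar)‖)]
    calc κ * (phi abar ^ 2 / (4 * diam abar ^ 2)) * h ≤ 1 / 4 * h :=
          mul_le_mul_of_nonneg_right (mul_phi_sq_div_le_quarter hκ1) hgap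
      _ ≤ s / 2 := by linarith
  linarith [le_min hlong hshort]

end FWAwayStep

lemma le_rpow_mul_of_contraction_or_drop {h : ℕ → ℝ} {c : ℕ → ℕ} {r : ℝ} (hr0 : 0 < r) (hr1 : r ≤ 1)
    (hanti : Antitone h)
    (hstep : ∀ k, 0 ≤ h k →
      (h (k + 1) ≤ r * h k ∧ c (k + 1) ≤ c k + 1) ∨ (h (k + 1) ≤ h k ∧ c (k + 1) + 1 ≤ c k))
    (h0 : 0 ≤ h 0) (k : ℕ) : h k ≤ r ^ (((k : ℝ) + c k - c 0) / 2) * h 0 := by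
  induction k with
  | zero => simp
  | succ k ih =>
    rcases lt_or_ge (h k) 0 with hneg | hpos
    · exact ((hanti k.le_succ).trans hneg.le).trans (by positivity)
    rcases hstep k hpos with ⟨hcontract, hc⟩ | ⟨hle, hc⟩
    · have hc' : (c (k + 1) : ℝ) ≤ c k + 1 := by exact_mod_cast hc
      calc h (k + 1) ≤ r * (r ^ (((k : ℝ) + c k - c 0) / 2) * h 0) :=
            hcontract.trans (mul_le_mul_of_nonneg_left ih hr0.le)
        _ = r ^ (((k : ℝ) + c k - c 0) / 2 + 1) * h 0 := by
          rw [Real.rpow_add_one hr0.ne', ← mul_assoc, mul_comm r]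
        _ ≤ r ^ ((((k + 1 : ℕ) : ℝ) + c (k + 1) - c 0) / 2) * h 0 := by
          refine mul_le_mul_of_nonneg_right (Real.rpow_le_rpow_of_exponent_ge hr0 hr1 ?_) h0
          push_cast
          linarith
    · have hc' : (c (k + 1) : ℝ) + 1 ≤ c k := by exact_mod_cast hc
      refine (hle.trans ih).trans
        (mul_le_mul_of_nonneg_right (Real.rpow_le_rpow_of_exponent_ge hr0 hr1 ?_) h0)
      push_cast
      linarith

lemma quadratic_apply_add {E F : Type*} [NormedAddCommGroup E] [InnerProductSpace ℝ E]
    [NormedAddCommGroup F] [InnerProductSpace ℝ F] {Q : E →ₗ[ℝ] E} {R : E →ₗ[ℝ] F} {b : E}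
    {f : E → ℝ} (hf : ∀ y, f y = 1 / 2 * ⟪y, Q y⟫ + ⟪b, y⟫)
    (hQ : ∀ u v, ⟪u, Q v⟫ = ⟪R u, R v⟫) (y d : E) :
    f (y + d) = f y + ⟪d, Q y + b⟫ + 1 / 2 * ‖R d‖ ^ 2 := by
  rw [← real_inner_self_eq_norm_sq, hf, hf]
  simp only [hQ, map_add, inner_add_left, inner_add_right]
  rw [real_inner_comm (R d) (R y), real_inner_comm d b]
  ring

theorem stmt12_general {m n p : ℕ} {a : Fin n → EuclideanSpace ℝ (Fin m)}
    {f : EuclideanSpace ℝ (Fin m) → ℝ}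
    {g : EuclideanSpace ℝ (Fin m) → EuclideanSpace ℝ (Fin m)}
    {R : EuclideanSpace ℝ (Fin m) →ₗ[ℝ] EuclideanSpace ℝ (Fin p)} (hR : Function.Injective R)
    {κ : ℝ} (hκ : κ ∈ Set.Icc (0 : ℝ) 1)
    (hsmooth : ∀ y d, f (y + d) ≤ f y + ⟪d, g y⟫ + 1 / 2 * ‖R d‖ ^ 2)
    (hstrong : ∀ y d, f y + ⟪d, g y⟫ + κ / 2 * ‖R d‖ ^ 2 ≤ f (y + d))
    {xstar : Fin n → ℝ} (hxstar : xstar ∈ stdSimplex ℝ (Fin n))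
    {ystar : EuclideanSpace ℝ (Fin m)} (hystar : ystar = comb a xstar)
    {abar : Fin n → EuclideanSpace ℝ (Fin p)} (habar : ∀ i, abar i = R (a i - ystar))
    {x : ℕ → Fin n → ℝ} (hx0 : x 0 ∈ stdSimplex ℝ (Fin n)) (hle : f ystar ≤ f (comb a (x 0)))
    (hstep : ∀ k, FWAwayStep a f (x k) (x (k + 1)) (comb a (x k)) (g (comb a (x k)))) (k : ℕ) :
    f (comb a (x k)) - f ystar ≤
      (1 - κ * (phi abar ^ 2 / (4 * diam abar ^ 2))) ^
          (((k : ℝ) + 1 - (posSupport (x 0)).card) / 2) *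
        (f (comb a (x 0)) - f ystar) := by
  set ρ := κ * (phi abar ^ 2 / (4 * diam abar ^ 2))
  have hρ0 : 0 ≤ ρ := mul_nonneg hκ.1 (by positivity)
  have hρ1 : ρ ≤ 1 / 4 := mul_phi_sq_div_le_quarter hκ.2
  have hx (i : ℕ) : x i ∈ stdSimplex ℝ (Fin n) := by
    induction i with
    | zero => exact hx0
    | succ i ih => exact (hstep i).mem_stdSimplex ih
  have hconv : ConvexOn ℝ Set.univ f := convexOn_of_forall_inner_le (g := g) fun y d =>
    le_trans (le_add_of_nonneg_right (mul_nonneg (div_nonneg hκ.1 zero_le_two) (sq_nonneg _)))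
      (hstrong y d)
  have hgap (y : EuclideanSpace ℝ (Fin m)) :
      f y - f ystar + κ / 2 * ‖R (y - ystar)‖ ^ 2 ≤ ⟪y - ystar, g y⟫ := by
    have hy := hstrong y (ystar - y)
    rw [add_sub_cancel, ← neg_sub y ystar, inner_neg_left, map_neg, norm_neg] at hy
    linarith
  have hanti : Antitone fun i => f (comb a (x i)) - f ystar :=
    antitone_nat_of_succ_le fun i => sub_le_sub_right (hstep i).apply_comb_le _
  have hrec := le_rpow_mul_of_contraction_or_drop (c := fun i => (posSupport (x i)).card)
    (r := 1 - ρ) (by linarith) (by linarith) hanti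
    (fun i => (hstep i).contraction_or_drop (hx i) hR habar hxstar hystar hκ hconv
      (hsmooth _) (hgap _))
    (sub_nonneg.2 hle) k
  refine hrec.trans (mul_le_mul_of_nonneg_right
    (Real.rpow_le_rpow_of_exponent_ge (by linarith) (by linarith) ?_) (sub_nonneg.2 hle))
  have hcard : (1 : ℝ) ≤ (posSupport (x k)).card := by
    exact_mod_cast (hstep k).posSupport_nonempty.card_pos
  linarith

/-- linear convergence of the Frank–Wolfe algorithm with away steps:
`f(y k) - f(y*) ≤ (1 - φ(Ā)²/(4 d(Ā)²))^(k/2) (f(y 0) - f(y*))`. -/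
theorem stmt12 (m n : ℕ) (hn : 0 < n) (a : Fin n → EuclideanSpace ℝ (Fin m))
    (hA : ∃ i, a i ≠ 0)
    (Q : EuclideanSpace ℝ (Fin m) →ₗ[ℝ] EuclideanSpace ℝ (Fin m))
    (hsymm : ∀ u v : EuclideanSpace ℝ (Fin m), ⟪Q u, v⟫ = ⟪u, Q v⟫)
    (hpd : ∀ v : EuclideanSpace ℝ (Fin m), v ≠ 0 → 0 < ⟪v, Q v⟫)
    (b : EuclideanSpace ℝ (Fin m)) (f : EuclideanSpace ℝ (Fin m) → ℝ)
    (hf : ∀ y, f y = 1 / 2 * ⟪y, Q y⟫ + ⟪b, y⟫)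
    -- `R = Q^{1/2}`, the symmetric positive definite square root of `Q`
    (R : EuclideanSpace ℝ (Fin m) →ₗ[ℝ] EuclideanSpace ℝ (Fin m))
    (hRsymm : ∀ u v : EuclideanSpace ℝ (Fin m), ⟪R u, v⟫ = ⟪u, R v⟫)
    (hRpd : ∀ v : EuclideanSpace ℝ (Fin m), v ≠ 0 → 0 < ⟪v, R v⟫)
    (hRsq : ∀ v, R (R v) = Q v)
    (xstar : Fin n → ℝ) (hxstar : xstar ∈ stdSimplex ℝ (Fin n))
    (hmin : ∀ x' ∈ stdSimplex ℝ (Fin n), f (comb a xstar) ≤ f (comb a x'))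
    (ystar : EuclideanSpace ℝ (Fin m)) (hystar : ystar = comb a xstar)
    (abar : Fin n → EuclideanSpace ℝ (Fin m)) (habar : ∀ i, abar i = R (a i - ystar))
    (x : ℕ → Fin n → ℝ) (y : ℕ → EuclideanSpace ℝ (Fin m))
    (hy : ∀ k, y k = comb a (x k))
    (hx0 : ∃ i : Fin n, x 0 = Pi.single i 1)
    (hstep : ∀ k : ℕ, FWAwayStep a f (x k) (x (k + 1)) (y k) (Q (y k) + b)) :
    ∀ k : ℕ, 1 ≤ k →
      f (y k) - f ystar ≤
        (1 - phi abar ^ 2 / (4 * diam abar ^ 2)) ^ ((k : ℝ) / 2) *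
          (f (y 0) - f ystar) := by
  have hR : Function.Injective R := (injective_iff_map_eq_zero R).2 fun v hv => by
    by_contra hne
    exact (hRpd v hne).ne' (by rw [hv, inner_zero_right])
  have hexpand := quadratic_apply_add hf fun u v => by rw [hRsymm, hRsq]
  obtain rfl : y = fun k => comb a (x k) := funext hy
  obtain ⟨i, hi⟩ := hx0
  have hx0 : x 0 ∈ stdSimplex ℝ (Fin n) := hi ▸ single_mem_stdSimplex ℝ i
  intro k _
  simpa [hi, posSupport_single_one] using stmt12_general hR (κ := 1) (by simp)
    (fun y d => (hexpand y d).le) (fun y d => (hexpand y d).ge) hxstar hystar habar hx0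
    (hystar ▸ hmin _ hx0) hstep k
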